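/- If gcd(i,j) = 1 and i ≥ j, then there is an A-algebra isomorphism R(A;i,j) ≅ M₂(A[s,t]/I), where I is the ideal of A[s,t] generated by f(i+j), f(i+j−1) − s^{j−1}, and s^{i−j} − (−1)^{i−j}. -/

import Mathlib

/-- The defining relations for `R(A;i,j)`: `x^i*y + y*x^j = 1` and `y^2 = 0`,
where `x` and `y` are the two generators of the free algebra. -/
inductive MatRel (A : Type*) [CommRing A] (i j : ℕ) :
    FreeAlgebra A (Fin 2) → FreeAlgebra A (Fin 2) → Prop
  | rel1 : MatRel A i j
      (FreeAlgebra.ι A (0 : Fin 2) ^ i * FreeAlgebra.ι A (1 : Fin 2) +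
        FreeAlgebra.ι A (1 : Fin 2) * FreeAlgebra.ι A (0 : Fin 2) ^ j) 1
  | rel2 : MatRel A i j (FreeAlgebra.ι A (1 : Fin 2) ^ 2) 0

/-- `R(A;i,j)`, the quotient of the free `A`-algebra on `x, y` by the two-sided ideal
generated by `x^i*y + y*x^j - 1` and `y^2`. -/
abbrev MatRing (A : Type*) [CommRing A] (i j : ℕ) : Type _ := RingQuot (MatRel A i j)

/-- The image of the generator `x` in `R(A;i,j)`. -/
noncomputable def Xgen (A : Type*) [CommRing A] (i j : ℕ) : MatRing A i j :=
  RingQuot.mkAlgHom A (MatRel A i j) (FreeAlgebra.ι A (0 : Fin 2))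

/-- The image of the generator `y` in `R(A;i,j)`. -/
noncomputable def Ygen (A : Type*) [CommRing A] (i j : ℕ) : MatRing A i j :=
  RingQuot.mkAlgHom A (MatRel A i j) (FreeAlgebra.ι A (1 : Fin 2))

/-- The recursively defined polynomials `f(0) = 0`, `f(1) = 1`,
`f(n) = t*f(n-1) + s*f(n-2)`, in `A[s,t]` where `s = X 0` and `t = X 1`. -/
noncomputable def fpoly (A : Type*) [CommRing A] : ℕ → MvPolynomial (Fin 2) A
  | 0 => 0
  | 1 => 1
  | (n + 2) => MvPolynomial.X 1 * fpoly A (n + 1) + MvPolynomial.X 0 * fpoly A n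

/-!
Put `v = x ^ i` and `w = x ^ j` in `R(A;i,j)`. The relation gives `v - w = v² * y - y * w²`; with
`y² = 0` this forces `v - w` and `v * w` to commute with `y`, so they are central and each of `v`
and `w` is quadratic over the center. For `j < i` the element `x` is a unit, and a Bézout relation
between `j` and `i` makes `x` an affine combination of `1` and `w` over the center. Thus `x` and `y`
satisfy the relations of the matrices `X = !![0, s; 1, t]` and `Y = !![0, c; 0, 0]` with central
`s`, `t`, `c`.

For these matrices `X ^ i * Y + Y * X ^ j = 1` says that `X ^ i = -adjugate (X ^ j)` and that `c`
inverts the lower left entry of `X ^ i`. Since `det X = -s`, this yields `X ^ (i + j) = -(-s) ^ j`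
and `(-s) ^ i = (-s) ^ j`. In terms of the Lucas sequence, which computes the powers of `X`, these
are the generators of `I`, once `t` is replaced by `(-1) ^ (j - 1) * t`.

Hence the coefficient ring maps to the center of `R(A;i,j)`, and `R(A;i,j)` maps to the matrices.
The resulting homomorphisms are mutually inverse because an endomorphism of the matrix algebra
fixing `X` and `Y` fixes `s` and `t`.
-/

section LucasSequence

/-- The Lucas sequence `U 0 = 0`, `U 1 = 1`, `U (n + 2) = t * U (n + 1) + s * U n` attached to two
elements of an arbitrary commutative ring, so that `fpoly` is the universal case. -/
def lucasU {C : Type*} [CommRing C] (s t : C) : ℕ → C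
  | 0 => 0
  | 1 => 1
  | n + 2 => t * lucasU s t (n + 1) + s * lucasU s t n

namespace lucasU

variable {C : Type*} [CommRing C] (s t : C)

@[simp] lemma zero : lucasU s t 0 = 0 := rfl

@[simp] lemma one : lucasU s t 1 = 1 := rfl

lemma add_two (n : ℕ) : lucasU s t (n + 2) = t * lucasU s t (n + 1) + s * lucasU s t n := rfl

lemma map {D F : Type*} [CommRing D] [FunLike F C D] [RingHomClass F C D] (g : F) (n : ℕ) :
    g (lucasU s t n) = lucasU (g s) (g t) n := by
  induction n using Nat.twoStepInduction with
  | zero => simp only [zero, map_zero]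
  | one => simp only [one, map_one]
  | more n h₁ h₂ => simp only [add_two, map_add, map_mul, h₁, h₂]

lemma neg_right (n : ℕ) : lucasU s (-t) n = (-1) ^ (n + 1) * lucasU s t n := by
  induction n using Nat.twoStepInduction with
  | zero => simp
  | one => simp
  | more n h₁ h₂ => rw [add_two, add_two, h₁, h₂]; ring

lemma add_add_one (m n : ℕ) : lucasU s t (m + n + 1) =
    lucasU s t (m + 1) * lucasU s t (n + 1) + s * (lucasU s t m * lucasU s t n) := by
  induction n using Nat.twoStepInduction with
  | zero => simp
  | one => rw [add_two, add_two, zero, one]; ring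
  | more n h₁ h₂ =>
    rw [show m + (n + 2) + 1 = m + n + 1 + 2 by ring, add_two, h₁,
      show m + n + 1 + 1 = m + (n + 1) + 1 by ring, h₂, add_two s t (n + 1), add_two s t n]
    ring

lemma docagne (m n : ℕ) : lucasU s t (m + n) * lucasU s t (n + 1) -
    lucasU s t (m + n + 1) * lucasU s t n = (-s) ^ n * lucasU s t m := by
  induction n with
  | zero => simp
  | succ n ih =>
    rw [pow_succ, mul_right_comm, ← ih, ← add_assoc, add_two, add_two]
    ring

lemma cassini (n : ℕ) :
    lucasU s t (n + 1) ^ 2 - lucasU s t (n + 2) * lucasU s t n = (-s) ^ n := by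
  rw [pow_two, add_comm n 1, add_comm n 2]
  simpa [add_comm, add_left_comm] using docagne s t 1 n

lemma dvd_mul (m k : ℕ) : lucasU s t m ∣ lucasU s t (m * k) := by
  cases m with
  | zero => simp
  | succ m =>
    induction k with
    | zero => simp
    | succ k ih =>
      rw [show (m + 1) * (k + 1) = (m + 1) * k + m + 1 by ring, add_add_one]
      exact dvd_add (dvd_mul_left _ _) ((ih.mul_right _).mul_left _)

variable {s t}

lemma pow_succ_eq {R : Type*} [Ring R] [Algebra C R] {x : R}
    (hx : x ^ 2 = t • x + s • (1 : R)) (n : ℕ) :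
    x ^ (n + 1) = lucasU s t (n + 1) • x + (s * lucasU s t n) • (1 : R) := by
  induction n with
  | zero => simp
  | succ n ih =>
    rw [pow_succ, ih, add_mul, smul_mul_assoc, ← pow_two, hx, add_two, smul_mul_assoc, one_mul]
    module

end lucasU

end LucasSequence

lemma exists_mul_eq_mul_add_one_of_coprime {m n : ℕ} (h : m.Coprime n) (hn : 1 < n) :
    ∃ k l, m * k = n * l + 1 := by
  obtain ⟨k, -, hk⟩ := Nat.exists_mul_mod_eq_one_of_coprime h hn
  exact ⟨k, m * k / n, by rw [← hk, Nat.div_add_mod]⟩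

section NilpotentRelation

variable {R : Type*} [Ring R] {x y v w : R}

lemma sub_eq_of_mul_add_mul_eq_one (h : v * y + y * w = 1) :
    v - w = v * v * y - y * w * w := by
  linear_combination (norm := noncomm_ring) h * w - v * h

lemma mul_mul_mul_eq_zero_of_mul_add_mul_eq_one (hvw : Commute v w) (h : v * y + y * w = 1)
    (hy : y * y = 0) : y * (v * w) * y = 0 := by
  have hyv : y * v * y = y := by linear_combination (norm := noncomm_ring) y * h - hy * w
  calc y * (v * w) * y = y * w * (v * y) := by rw [hvw.eq]; noncomm_ring
    _ = (1 - v * y) * (v * y) := by rw [eq_sub_of_add_eq' h]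
    _ = v * (y - y * v * y) := by noncomm_ring
    _ = 0 := by rw [hyv, sub_self, mul_zero]

lemma commute_sub_of_mul_add_mul_eq_one (hvw : Commute v w) (h : v * y + y * w = 1)
    (hy : y * y = 0) : Commute (v - w) y := by
  have hu := sub_eq_of_mul_add_mul_eq_one h
  have hleft : (v - w) * y = -(y * w * w * y) := by
    rw [hu]
    linear_combination (norm := noncomm_ring) v * v * hy
  have hright : y * (v - w) = y * v * v * y := by
    rw [hu]
    linear_combination (norm := noncomm_ring) -hy * (w * w)
  have hsq : y * (v - w) * ((v - w) * y) = 0 := by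
    rw [hleft, hright]
    linear_combination (norm := noncomm_ring) -(y * v * v) * hy * (w * w * y)
  have hmul := mul_mul_mul_eq_zero_of_mul_add_mul_eq_one hvw h hy
  have hwv : y * (w * v) * y = 0 := hvw.eq ▸ hmul
  calc (v - w) * y = -(y * w * w * y) := hleft
    _ = y * v * v * y := by
      linear_combination (norm := noncomm_ring) -hsq - hmul - hwv
    _ = y * (v - w) := hright.symm

lemma mul_add_mul_eq_one_swap (hvw : Commute v w) (h : v * y + y * w = 1) (hy : y * y = 0) :
    w * y + y * v = 1 := by
  linear_combination (norm := noncomm_ring) h - (commute_sub_of_mul_add_mul_eq_one hvw h hy).eq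

lemma commute_mul_of_mul_add_mul_eq_one (hvw : Commute v w) (h : v * y + y * w = 1)
    (hy : y * y = 0) : Commute (v * w) y := by
  have hswap := mul_add_mul_eq_one_swap hvw h hy
  calc v * w * y = v * (1 - y * v) := by rw [← eq_sub_of_add_eq hswap, mul_assoc]
    _ = (1 - v * y) * v := by noncomm_ring
    _ = y * (w * v) := by rw [← eq_sub_of_add_eq' h, mul_assoc]
    _ = y * (v * w) := by rw [hvw.eq]

lemma isUnit_of_pow_mul_add_mul_pow_eq_one {m n : ℕ} (hmn : n < m)
    (h : x ^ (m + 1) * y + y * x ^ (n + 1) = 1) (hy : y * y = 0) : IsUnit x := by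
  have hswap := mul_add_mul_eq_one_swap (Commute.pow_pow_self x _ _) h hy
  obtain ⟨d, rfl⟩ := Nat.exists_eq_add_of_lt hmn
  have hpow : x ^ (n + d + 1 + 1) = x ^ (n + 1) * x ^ (d + 1) := by rw [← pow_add]; congr 1; ring
  have hpow' : x ^ (n + d + 1 + 1) = x ^ (d + 1) * x ^ (n + 1) := by rw [← pow_add]; congr 1; ring
  refine isUnit_iff_exists_and_exists.mpr
    ⟨⟨x ^ n * y + x ^ d - x ^ (n + d + 1) * y * x ^ (d + 1), ?_⟩,
      ⟨x ^ d - x ^ (d + 1) * y * x ^ (n + d + 1) + y * x ^ n, ?_⟩⟩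
  · calc
      _ = x ^ (n + 1) * y + (1 - x ^ (n + d + 1 + 1) * y) * x ^ (d + 1) := by
        simp only [pow_succ' x]; noncomm_ring
      _ = x ^ (n + 1) * y + y * x ^ (n + d + 1 + 1) := by
        rw [← eq_sub_of_add_eq' h, hpow, mul_assoc]
      _ = 1 := hswap
  · calc
      _ = x ^ (d + 1) * (1 - y * x ^ (n + d + 1 + 1)) + y * x ^ (n + 1) := by
        simp only [pow_succ x]; noncomm_ring
      _ = x ^ (n + d + 1 + 1) * y + y * x ^ (n + 1) := by
        rw [← eq_sub_of_add_eq hswap, hpow', mul_assoc]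
      _ = 1 := h

end NilpotentRelation

/-- The relations over `C` between the matrices `x = !![0, s; 1, t]` and `y = !![0, c; 0, 0]`, as a
condition on two elements of a `C`-algebra. -/
structure IsCompanionPair {C R : Type*} [CommRing C] [Ring R] [Algebra C R] (s t c : C) (x y : R) :
    Prop where
  sq_eq : x ^ 2 = t • x + s • (1 : R)
  mul_add_mul : x * y + y * x = t • y + c • (1 : R)
  mul_self : y * y = 0

/-- The condition on the entries of `x = !![0, s; 1, t]` and `y = !![0, c; 0, 0]` that amounts to
`x ^ (i + 1) * y + y * x ^ (j + 1) = 1`. -/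
structure IsCompanionParam {C : Type*} [CommRing C] (i j : ℕ) (s t c : C) : Prop where
  left : lucasU s t (i + 1) * c = 1
  right : lucasU s t (j + 1) * c = 1
  add_eq_zero : s * lucasU s t i + lucasU s t (j + 2) = 0

lemma IsCompanionParam.lucasU_eq {C : Type*} [CommRing C] {i j : ℕ} {s t c : C}
    (h : IsCompanionParam i j s t c) : lucasU s t (i + 1) = lucasU s t (j + 1) :=
  left_inv_eq_right_inv h.left (by rw [mul_comm, h.right])

namespace IsCompanionPair

variable {C R : Type*} [CommRing C] [Ring R] [Algebra C R] {s t c : C} {x y : R}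

lemma of_sub_of_mul {v w : R} {q u : C} (h : v * y + y * w = 1) (hy : y * y = 0)
    (hu : v - w = u • (1 : R)) (hq : v * w = q • (1 : R)) : IsCompanionPair q u 1 v y := by
  have hw : w = v - u • (1 : R) := by rw [← hu, sub_sub_cancel]
  rw [hw] at h hq
  simp only [mul_sub, mul_smul_comm, mul_one] at h hq
  refine ⟨?_, ?_, hy⟩
  · rw [pow_two, ← hq, add_sub_cancel]
  · rw [one_smul, ← h]
    abel

lemma affine (h : IsCompanionPair s t c x y) (a b : C) :
    IsCompanionPair (b ^ 2 * s - a ^ 2 - a * b * t) (2 * a + b * t) (b * c)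
      (a • (1 : R) + b • x) y where
  sq_eq := by
    have hsq := h.sq_eq
    rw [pow_two] at hsq ⊢
    simp only [mul_add, add_mul, mul_smul_comm, smul_mul_assoc, one_mul, mul_one, hsq]
    module
  mul_add_mul := by
    simp only [mul_add, add_mul, mul_smul_comm, smul_mul_assoc, one_mul, mul_one]
    linear_combination (norm := module) b • h.mul_add_mul
  mul_self := h.mul_self

lemma mul_mul_self (h : IsCompanionPair s t c x y) : y * x * y = c • y := by
  rw [eq_sub_of_add_eq' h.mul_add_mul, sub_mul, add_mul, smul_mul_assoc, smul_mul_assoc, one_mul,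
    mul_assoc x, h.mul_self, smul_zero, mul_zero, zero_add, sub_zero]

lemma pow_mul_add_mul_pow (h : IsCompanionPair s t c x y) (m n : ℕ) :
    x ^ (m + 1) * y + y * x ^ (n + 1) =
      (lucasU s t (m + 1) - lucasU s t (n + 1)) • (x * y) +
        (s * lucasU s t m + lucasU s t (n + 2)) • y + (lucasU s t (n + 1) * c) • (1 : R) := by
  rw [lucasU.pow_succ_eq h.sq_eq, lucasU.pow_succ_eq h.sq_eq, lucasU.add_two]
  simp only [mul_add, add_mul, mul_smul_comm, smul_mul_assoc, one_mul, mul_one,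
    eq_sub_of_add_eq' h.mul_add_mul]
  module

lemma pow_mul_add_mul_pow_eq_one {i j : ℕ} (h : IsCompanionPair s t c x y)
    (hp : IsCompanionParam i j s t c) : x ^ (i + 1) * y + y * x ^ (j + 1) = 1 := by
  rw [h.pow_mul_add_mul_pow, hp.lucasU_eq, sub_self, zero_smul, hp.add_eq_zero, zero_smul, hp.right,
    one_smul, add_zero, zero_add]

lemma isCompanionParam {i j : ℕ} (h : IsCompanionPair s t c x y)
    (hy : Function.Injective fun z : C => z • y) (hxy : x ^ (i + 1) * y + y * x ^ (j + 1) = 1) :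
    IsCompanionParam i j s t c := by
  rw [h.pow_mul_add_mul_pow] at hxy
  have left : lucasU s t (i + 1) * c = 1 := hy <| by
    have := congrArg (y * ·) hxy
    simp only [mul_add, mul_smul_comm, mul_one, ← mul_assoc, h.mul_mul_self, h.mul_self] at this
    linear_combination (norm := module) this
  have right : lucasU s t (j + 1) * c = 1 := hy <| by
    have := congrArg (· * y) hxy
    simp only [add_mul, smul_mul_assoc, one_mul, mul_assoc x, h.mul_self, mul_zero] at this
    linear_combination (norm := module) this
  have heq : lucasU s t (i + 1) = lucasU s t (j + 1) :=
    left_inv_eq_right_inv left (by rw [mul_comm, right])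
  refine ⟨left, right, hy ?_⟩
  rw [heq, right] at hxy
  linear_combination (norm := module) hxy

end IsCompanionPair

section MatrixUnits

variable {B R n : Type*} [CommRing B] [Ring R] [Algebra B R] [Fintype n] [DecidableEq n]

/-- The algebra homomorphism sending the standard matrix units to a given system `e` of matrix
units of an algebra. -/
def algHomOfMatrixUnits (e : n → n → R)
    (mul : ∀ i j k l, e i j * e k l = if j = k then e i l else 0) (one : ∑ i, e i i = 1) :
    Matrix n n B →ₐ[B] R :=
  AlgHom.ofLinearMap
    { toFun := fun m => ∑ i, ∑ j, m i j • e i j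
      map_add' := fun m m' => by simp only [Matrix.add_apply, add_smul, Finset.sum_add_distrib]
      map_smul' := fun b m => by
        simp only [Matrix.smul_apply, smul_assoc, Finset.smul_sum, RingHom.id_apply] }
    (by simp [Matrix.one_apply, ite_smul, one])
    (fun m m' => by
      simp only [LinearMap.coe_mk, AddHom.coe_mk, Finset.sum_mul_sum, smul_mul_smul_comm, mul,
        smul_ite, smul_zero, Matrix.mul_apply, Finset.sum_smul]
      refine Finset.sum_congr rfl fun i _ => ?_
      rw [Finset.sum_comm]
      refine Finset.sum_congr rfl fun k _ => ?_
      rw [Finset.sum_comm]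
      simp only [Finset.sum_ite_eq', Finset.mem_univ, if_true])

lemma algHomOfMatrixUnits_apply (e : n → n → R)
    (mul : ∀ i j k l, e i j * e k l = if j = k then e i l else 0) (one : ∑ i, e i i = 1)
    (m : Matrix n n B) : algHomOfMatrixUnits e mul one m = ∑ i, ∑ j, m i j • e i j := rfl

lemma exists_algHom_of_mul_add_mul_eq_one {a b : R} (ha : a * a = 0) (hb : b * b = 0)
    (hab : a * b + b * a = 1) :
    ∃ f : Matrix (Fin 2) (Fin 2) B →ₐ[B] R, ∀ m,
      f m = m 0 0 • (a * b) + m 0 1 • a + m 1 0 • b + m 1 1 • (b * a) := by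
  have haba : a * b * a = a := by linear_combination (norm := noncomm_ring) hab * a - b * ha
  have hbab : b * a * b = b := by linear_combination (norm := noncomm_ring) hab * b - a * hb
  let e : Fin 2 → Fin 2 → R := ![![a * b, a], ![b, b * a]]
  refine ⟨algHomOfMatrixUnits e (fun i j k l => ?_) ?_, fun m => ?_⟩
  · fin_cases i <;> fin_cases j <;> fin_cases k <;> fin_cases l <;>
      simp [e, ← mul_assoc, ha, hb, haba, hbab, mul_assoc a b b, mul_assoc b a a]
  · simpa [e, Fin.sum_univ_two] using hab
  · rw [algHomOfMatrixUnits_apply]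
    simp [e, Fin.sum_univ_two, add_assoc]

end MatrixUnits

namespace IsCompanionPair

variable {C R : Type*} [CommRing C] [Ring R] [Algebra C R] {s t c : C} {x y : R}

lemma smul_right (h : IsCompanionPair s t c x y) (d : C) :
    IsCompanionPair s t (d * c) x (d • y) where
  sq_eq := h.sq_eq
  mul_add_mul := by
    rw [mul_smul_comm, smul_mul_assoc, ← smul_add, h.mul_add_mul]
    module
  mul_self := by rw [smul_mul_smul_comm, h.mul_self, smul_zero]

lemma exists_algHom_of_one (h : IsCompanionPair s t 1 x y) :
    ∃ f : Matrix (Fin 2) (Fin 2) C →ₐ[C] R, f !![0, s; 1, t] = x ∧ f !![0, 1; 0, 0] = y := by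
  obtain ⟨b, hb⟩ : ∃ b, b = x - s • y - t • (x * y) := ⟨_, rfl⟩
  have hby : b * y = x * y := by
    simp only [hb, sub_mul, smul_mul_assoc, mul_assoc, h.mul_self, mul_zero, smul_zero, sub_zero]
  have hyb : y * b = 1 - x * y := by
    simp only [hb, mul_sub, mul_smul_comm, ← mul_assoc, h.mul_mul_self, h.mul_self]
    linear_combination (norm := module) h.mul_add_mul
  have hbb : b * b = 0 := by
    calc b * b = x * b - s • (y * b) - t • (x * (y * b)) := by
          nth_rw 1 [hb]
          simp only [sub_mul, smul_mul_assoc, mul_assoc]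
      _ = x * x - t • x - s • (1 : R) := by
          rw [hyb, hb]
          simp only [mul_sub, mul_smul_comm, mul_one]
          module
      _ = 0 := by rw [← pow_two, h.sq_eq, add_sub_cancel_left, sub_self]
  obtain ⟨f, hf⟩ := exists_algHom_of_mul_add_mul_eq_one (B := C) h.mul_self hbb
    (by rw [hyb, hby, sub_add_cancel])
  refine ⟨f, ?_, ?_⟩
  · suffices s • y + b + t • (x * y) = x by simpa [hf, hby] using this
    rw [hb]
    abel
  · simp [hf]

lemma exists_algHom {d : C} (h : IsCompanionPair s t c x y) (hdc : d * c = 1) :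
    ∃ f : Matrix (Fin 2) (Fin 2) C →ₐ[C] R, f !![0, s; 1, t] = x ∧ f !![0, c; 0, 0] = y := by
  obtain ⟨f, hx, hy⟩ := (hdc ▸ h.smul_right d).exists_algHom_of_one
  refine ⟨f, hx, ?_⟩
  have : !![0, c; 0, 0] = c • (!![0, 1; 0, 0] : Matrix (Fin 2) (Fin 2) C) := by simp
  rw [this, map_smul, hy, smul_smul, mul_comm, hdc, one_smul]

end IsCompanionPair

section CompanionMatrix

variable {B : Type*} [CommRing B] {s t c : B}

lemma isCompanionPair_matrix (s t c : B) :
    IsCompanionPair s t c (!![0, s; 1, t] : Matrix (Fin 2) (Fin 2) B) !![0, c; 0, 0] where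
  sq_eq := by
    ext k l
    fin_cases k <;> fin_cases l <;> simp [pow_two, add_comm, mul_comm]
  mul_add_mul := by
    ext k l
    fin_cases k <;> fin_cases l <;> simp [mul_comm]
  mul_self := by
    ext k l
    fin_cases k <;> fin_cases l <;> simp

lemma exists_eq_smul_one_of_commute {d : B} (hdc : d * c = 1) {m : Matrix (Fin 2) (Fin 2) B}
    (hx : Commute m !![0, s; 1, t]) (hy : Commute m !![0, c; 0, 0]) :
    ∃ b : B, m = b • (1 : Matrix (Fin 2) (Fin 2) B) := by
  have hx₀₀ : m 0 1 = s * m 1 0 := by simpa [Matrix.mul_apply] using congrFun₂ hx.eq 0 0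
  have hy₀₁ : m 0 0 * c = c * m 1 1 := by simpa [Matrix.mul_apply] using congrFun₂ hy.eq 0 1
  have hy₁₁ : m 1 0 * c = 0 := by simpa [Matrix.mul_apply] using congrFun₂ hy.eq 1 1
  have h₁₀ : m 1 0 = 0 := by linear_combination d * hy₁₁ - m 1 0 * hdc
  have h₀₀ : m 0 0 = m 1 1 := by linear_combination d * hy₀₁ - (m 0 0 - m 1 1) * hdc
  refine ⟨m 0 0, ?_⟩
  ext k l
  fin_cases k <;> fin_cases l <;> simp [hx₀₀, h₁₀, h₀₀]

lemma companion_decomposition {d : B} (hdc : d * c = 1) (m : Matrix (Fin 2) (Fin 2) B) :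
    m = m 0 0 • (1 : Matrix (Fin 2) (Fin 2) B) + (m 1 0) • !![0, s; 1, t] +
      (d * (m 0 1 - s * m 1 0)) • !![0, c; 0, 0] +
      (d * (m 1 1 - m 0 0 - t * m 1 0)) • (!![0, s; 1, t] * !![0, c; 0, 0]) := by
  have h₀₁ : d * (m 0 1 - s * m 1 0) * c = m 0 1 - s * m 1 0 := by
    rw [mul_right_comm, hdc, one_mul]
  have h₁₁ : d * (m 1 1 - m 0 0 - t * m 1 0) * c = m 1 1 - m 0 0 - t * m 1 0 := by
    rw [mul_right_comm, hdc, one_mul]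
  ext k l
  fin_cases k <;> fin_cases l <;> simp [h₀₁, h₁₁, mul_comm]

-- The scalars `s` and `t` are the coefficients of the quadratic relation of `!![0, s; 1, t]`, so an
-- endomorphism fixing that matrix and carrying scalars to scalars must fix them.
lemma algHom_eq_id_of_companion {A : Type*} [CommRing A] [Algebra A B] {d : B} (hdc : d * c = 1)
    (hB : Algebra.adjoin A {s, t} = ⊤)
    (f : Matrix (Fin 2) (Fin 2) B →ₐ[A] Matrix (Fin 2) (Fin 2) B)
    (hx : f !![0, s; 1, t] = !![0, s; 1, t]) (hy : f !![0, c; 0, 0] = !![0, c; 0, 0]) :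
    f = AlgHom.id A _ := by
  have hscalar (b : B) : ∃ p : B, f (algebraMap B _ b) = p • (1 : Matrix (Fin 2) (Fin 2) B) := by
    refine exists_eq_smul_one_of_commute hdc (s := s) (t := t) ?_ ?_
    · simpa only [hx] using (Algebra.commute_algebraMap_left b !![0, s; 1, t]).map f
    · simpa only [hy] using (Algebra.commute_algebraMap_left b !![0, c; 0, 0]).map f
  obtain ⟨p, hp⟩ := hscalar t
  obtain ⟨r, hr⟩ := hscalar s
  have hsq : t • !![0, s; 1, t] + s • (1 : Matrix (Fin 2) (Fin 2) B) =
      p • !![0, s; 1, t] + r • 1 := by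
    have hsq := (isCompanionPair_matrix s t c).sq_eq
    calc t • !![0, s; 1, t] + s • (1 : Matrix (Fin 2) (Fin 2) B)
      _ = f (!![0, s; 1, t] ^ 2) := by rw [map_pow, hx, hsq]
      _ = f (algebraMap B _ t * !![0, s; 1, t] + algebraMap B _ s) := by
        rw [hsq, Algebra.smul_def t, ← Algebra.algebraMap_eq_smul_one]
      _ = p • !![0, s; 1, t] + r • 1 := by
        rw [map_add, map_mul, hp, hr, hx, smul_one_mul]
  have hs : s = r := by simpa using congrFun₂ hsq 0 0
  have ht : t = p := by simpa using congrFun₂ hsq 1 0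
  have hfix : f.comp (IsScalarTower.toAlgHom A B _) = IsScalarTower.toAlgHom A B _ := by
    refine AlgHom.ext_of_adjoin_eq_top hB ?_
    rintro z (rfl | rfl)
    · simpa [← hs, Algebra.algebraMap_eq_smul_one] using hr
    · simpa [← ht, Algebra.algebraMap_eq_smul_one] using hp
  have hsmul (b : B) (m : Matrix (Fin 2) (Fin 2) B) : f (b • m) = b • f m := by
    rw [Algebra.smul_def, map_mul, Algebra.smul_def]
    exact congrArg (· * f m) (DFunLike.congr_fun hfix b)
  ext1 m
  rw [companion_decomposition hdc (s := s) (t := t) m]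
  simp only [map_add, hsmul, map_mul, hx, hy, map_one, AlgHom.id_apply]

lemma IsCompanionParam.isUnit_neg {i j : ℕ} (h : IsCompanionParam i j s t c) (hij : j < i) :
    IsUnit (-s) := by
  have hpair := isCompanionPair_matrix s t c
  have := isUnit_of_pow_mul_add_mul_pow_eq_one hij (hpair.pow_mul_add_mul_pow_eq_one h)
    hpair.mul_self
  simpa [Matrix.isUnit_iff_isUnit_det] using this

end CompanionMatrix

section PeriodicParam

/-- The vanishing at `(s, t)` of the generators of the ideal defining the coefficient ring. It is
meant for `1 ≤ j ≤ i`, so that the subtractions do not truncate. -/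
structure IsPeriodicParam {C : Type*} [CommRing C] (i j : ℕ) (s t : C) : Prop where
  lucasU_add : lucasU s t (i + j) = 0
  lucasU_add_sub_one : lucasU s t (i + j - 1) = s ^ (j - 1)
  pow_sub : s ^ (i - j) = (-1) ^ (i - j)

variable {C : Type*} [CommRing C] {s t c : C} {i j : ℕ}

lemma isPeriodicParam_iff_neg_one_pow_mul (hg : (i + 1).Coprime (j + 1)) :
    IsPeriodicParam (i + 1) (j + 1) s t ↔ lucasU s ((-1) ^ j * t) (i + j + 2) = 0 ∧
      lucasU s ((-1) ^ j * t) (i + j + 1) = (-s) ^ j ∧ (-s) ^ (i - j) = 1 := by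
  have hpow : s ^ (i - j) = (-1) ^ (i - j) ↔ (-s) ^ (i - j) = 1 := by
    rcases Nat.even_or_odd (i - j) with h | h
    · rw [h.neg_one_pow, h.neg_pow]
    · rw [h.neg_one_pow, h.neg_pow, neg_eq_iff_eq_neg]
  have hiff : IsPeriodicParam (i + 1) (j + 1) s t ↔ lucasU s t (i + j + 2) = 0 ∧
      lucasU s t (i + j + 1) = s ^ j ∧ s ^ (i - j) = (-1) ^ (i - j) := by
    rw [← Nat.add_sub_add_right i 1 j, show i + j + 2 = i + 1 + (j + 1) by ring,
      show i + j + 1 = i + 1 + (j + 1) - 1 by omega]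
    exact ⟨fun h => ⟨h.1, h.2, h.3⟩, fun h => ⟨h.1, h.2.1, h.2.2⟩⟩
  rw [hiff, hpow]
  rcases Nat.even_or_odd j with hj | hj
  · rw [hj.neg_one_pow, hj.neg_pow, one_mul]
  · have hi : Even i := by
      by_contra hi
      have := Nat.dvd_gcd (Nat.not_even_iff_odd.mp hi).add_one.two_dvd hj.add_one.two_dvd
      rw [hg] at this
      omega
    have ho : Odd (i + j) := hi.add_odd hj
    rw [hj.neg_one_pow, hj.neg_pow, neg_one_mul, lucasU.neg_right, lucasU.neg_right,
      (ho.add_even even_two).add_one.neg_one_pow, ho.add_one.add_one.neg_one_pow]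
    simp

lemma exists_isCompanionParam (hij : j ≤ i) (hg : (i + 1).Coprime (j + 1))
    (h₀ : lucasU s t (i + j + 2) = 0) (h₁ : lucasU s t (i + j + 1) = (-s) ^ j)
    (hs : (-s) ^ (i - j) = 1) : ∃ c, IsCompanionParam i j s t c := by
  rcases hij.eq_or_lt with rfl | hlt
  · obtain rfl : j = 0 := by simpa using hg
    exact ⟨1, by simp, by simp, by simpa using h₀⟩
  have hsu : IsUnit (-s) := IsUnit.of_pow_eq_one hs (by omega)
  have h₂ : lucasU s t (i + j + 3) = s * (-s) ^ j := by rw [lucasU.add_two, h₀, h₁]; ring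
  have heq : lucasU s t (j + 1) = lucasU s t (i + 1) := by
    have := lucasU.docagne s t (i + 1) (j + 1)
    rw [show i + 1 + (j + 1) = i + j + 2 by ring, h₀, h₂] at this
    exact (hsu.pow (j + 1)).mul_left_cancel (by rw [← this]; ring)
  have hadd : s * lucasU s t i + lucasU s t (j + 2) = 0 := by
    have := lucasU.docagne s t i (j + 1)
    rw [show i + (j + 1) = i + j + 1 by ring, h₀, h₁] at this
    exact (hsu.pow (j + 1)).mul_left_cancel (by rw [mul_add, mul_left_comm, ← this]; ring)
  have hunit : IsUnit (lucasU s t (i + 1)) := by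
    obtain ⟨k, l, hkl⟩ := exists_mul_eq_mul_add_one_of_coprime hg.symm (by omega)
    have hk := heq ▸ lucasU.dvd_mul s t (j + 1) k
    have hl := lucasU.dvd_mul s t (i + 1) l
    rw [hkl] at hk
    have := lucasU.cassini s t ((i + 1) * l)
    exact isUnit_of_dvd_unit (this ▸ dvd_sub (hk.pow two_ne_zero) (hl.mul_left _)) (hsu.pow _)
  obtain ⟨c, hc⟩ := hunit.exists_right_inv
  exact ⟨c, hc, heq ▸ hc, hadd⟩

lemma IsCompanionParam.lucasU_add_add_two (h : IsCompanionParam i j s t c) :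
    lucasU s t (i + j + 2) = 0 := by
  rw [show i + j + 2 = i + (j + 1) + 1 by ring, lucasU.add_add_one]
  linear_combination lucasU s t (i + 1) * h.add_eq_zero - s * lucasU s t i * h.lucasU_eq

lemma IsCompanionParam.lucasU_add_add_one (h : IsCompanionParam i j s t c) :
    lucasU s t (i + j + 1) = (-s) ^ j := by
  rw [lucasU.add_add_one]
  linear_combination lucasU.cassini s t j + lucasU s t j * h.add_eq_zero +
    lucasU s t (j + 1) * h.lucasU_eq

lemma IsCompanionParam.neg_pow_sub (h : IsCompanionParam i j s t c) (hij : j ≤ i) :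
    (-s) ^ (i - j) = 1 := by
  rcases hij.eq_or_lt with rfl | hlt
  · rw [Nat.sub_self, pow_zero]
  have hadd : lucasU s t (i + 2) + s * lucasU s t j = 0 := by
    linear_combination h.add_eq_zero + lucasU.add_two s t i - lucasU.add_two s t j +
      t * h.lucasU_eq
  have hpow : (-s) ^ i = (-s) ^ j := by
    linear_combination lucasU.cassini s t j - lucasU.cassini s t i - lucasU s t i * hadd +
      (lucasU s t (i + 1) + lucasU s t (j + 1)) * h.lucasU_eq + lucasU s t j * h.add_eq_zero
  refine ((h.isUnit_neg hlt).pow j).mul_left_cancel ?_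
  rw [← pow_add, Nat.add_sub_cancel' hij, mul_one, hpow]

theorem isPeriodicParam_iff_exists_isCompanionParam (hij : j ≤ i)
    (hg : (i + 1).Coprime (j + 1)) :
    IsPeriodicParam (i + 1) (j + 1) s t ↔ ∃ c, IsCompanionParam i j s ((-1) ^ j * t) c := by
  rw [isPeriodicParam_iff_neg_one_pow_mul hg]
  refine ⟨fun ⟨h₀, h₁, hs⟩ => exists_isCompanionParam hij hg h₀ h₁ hs, fun ⟨c, h⟩ => ?_⟩
  exact ⟨h.lucasU_add_add_two, h.lucasU_add_add_one, h.neg_pow_sub hij⟩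

end PeriodicParam

section CompanionPresentation

variable {C R : Type*} [CommRing C] [Ring R] [Algebra C R] {x y : R}

lemma smul_left_injective_of_mul_add_mul_eq_one (hinj : Function.Injective (algebraMap C R))
    {v w : R} (h : v * y + y * w = 1) : Function.Injective fun a : C => a • y := by
  intro a b hab
  apply hinj
  dsimp only at hab
  rw [Algebra.algebraMap_eq_smul_one, Algebra.algebraMap_eq_smul_one, ← h, smul_add, smul_add,
    ← mul_smul_comm a, ← mul_smul_comm b, ← smul_mul_assoc a, ← smul_mul_assoc b, hab]

lemma exists_isCompanionPair_pow
    (hC : ∀ z : R, Commute z x → Commute z y → ∃ a : C, z = a • (1 : R)) {m n : ℕ}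
    (h : x ^ m * y + y * x ^ n = 1) (hy : y * y = 0) :
    ∃ q u : C, IsCompanionPair q u 1 (x ^ n) y ∧ x ^ (n + m) = q • (1 : R) := by
  have hcomm := Commute.pow_pow_self x m n
  have hswap := mul_add_mul_eq_one_swap hcomm h hy
  obtain ⟨u, hu⟩ := hC (x ^ n - x ^ m)
    ((Commute.pow_self x n).sub_left (Commute.pow_self x m))
    (commute_sub_of_mul_add_mul_eq_one hcomm.symm hswap hy)
  obtain ⟨q, hq⟩ := hC (x ^ n * x ^ m) (pow_add x n m ▸ Commute.pow_self x _)
    (commute_mul_of_mul_add_mul_eq_one hcomm.symm hswap hy)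
  exact ⟨q, u, .of_sub_of_mul hswap hy hu hq, pow_add x n m ▸ hq⟩

lemma exists_eq_smul_one_add_smul_pow {m n : ℕ} {q u : C} (hnm : n.Coprime m) (hm : 1 < m)
    (hsq : (x ^ n) ^ 2 = u • x ^ n + q • (1 : R)) (hq : x ^ (n + m) = q • (1 : R))
    (hqu : IsUnit q) : ∃ a b : C, x = a • (1 : R) + b • x ^ n := by
  obtain ⟨k, l, hkl⟩ := exists_mul_eq_mul_add_one_of_coprime hnm hm
  obtain ⟨k, rfl⟩ := Nat.exists_eq_succ_of_ne_zero (by rintro rfl; simp at hkl : k ≠ 0)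
  obtain ⟨p, hp⟩ := hqu.exists_left_inv
  have hpow : q ^ l • x = (x ^ n) ^ (k + l + 1) := by
    calc q ^ l • x = (q • (1 : R)) ^ l * x := by rw [smul_pow, one_pow, smul_one_mul]
      _ = x ^ ((n + m) * l + 1) := by rw [← hq, ← pow_mul, pow_succ]
      _ = (x ^ n) ^ (k + l + 1) := by
        rw [← pow_mul]
        congr 1
        linarith
  rw [lucasU.pow_succ_eq hsq] at hpow
  refine ⟨p ^ l * (q * lucasU q u (k + l)), p ^ l * lucasU q u (k + l + 1), ?_⟩
  calc x = p ^ l • q ^ l • x := by rw [smul_smul, ← mul_pow, hp, one_pow, one_smul]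
    _ = _ := by rw [hpow]; module

lemma isUnit_of_isUnit_smul_one (hinj : Function.Injective (algebraMap C R))
    (hC : ∀ z : R, Commute z x → Commute z y → ∃ a : C, z = a • (1 : R)) {q : C}
    (hq : IsUnit (q • (1 : R))) : IsUnit q := by
  obtain ⟨z, hz⟩ := hq
  rw [← Algebra.algebraMap_eq_smul_one] at hz
  have hcomm (r : R) : Commute (↑z⁻¹ : R) r :=
    Commute.units_inv_left (hz ▸ Algebra.commute_algebraMap_left q r)
  obtain ⟨p, hp⟩ := hC _ (hcomm x) (hcomm y)
  refine IsUnit.of_mul_eq_one p (hinj ?_)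
  rw [map_mul, map_one, ← hz, Algebra.algebraMap_eq_smul_one p, ← hp, Units.mul_inv]

theorem exists_isCompanionPair (hinj : Function.Injective (algebraMap C R))
    (hC : ∀ z : R, Commute z x → Commute z y → ∃ a : C, z = a • (1 : R)) {i j : ℕ}
    (hij : j ≤ i) (hg : (i + 1).Coprime (j + 1))
    (h : x ^ (i + 1) * y + y * x ^ (j + 1) = 1) (hy : y * y = 0) :
    ∃ s t c : C, IsCompanionPair s t c x y ∧ IsCompanionParam i j s t c := by
  obtain ⟨q, u, hpair, hq⟩ := exists_isCompanionPair_pow hC h hy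
  obtain ⟨a, b, hx⟩ : ∃ a b : C, x = a • (1 : R) + b • x ^ (j + 1) := by
    rcases hij.eq_or_lt with rfl | hlt
    · obtain rfl : j = 0 := by simpa using hg
      exact ⟨0, 1, by simp⟩
    have hxu := isUnit_of_pow_mul_add_mul_pow_eq_one hlt h hy
    exact exists_eq_smul_one_add_smul_pow hg.symm (by omega) hpair.sq_eq hq
      (isUnit_of_isUnit_smul_one hinj hC (hq ▸ hxu.pow _))
  have hpair' := hpair.affine a b
  rw [← hx] at hpair'
  exact ⟨_, _, _, hpair',
    hpair'.isCompanionParam (smul_left_injective_of_mul_add_mul_eq_one hinj h) h⟩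

end CompanionPresentation

theorem nonempty_algEquiv_of_isCompanionPair {A B C R : Type*} [CommRing A] [CommRing B]
    [CommRing C] [Ring R] [Algebra A B] [Algebra A C] [Algebra A R] [Algebra C R]
    [IsScalarTower A C R] {x y : R} {s t d : B} {c : C} {i j : ℕ}
    (hR : Algebra.adjoin A {x, y} = ⊤) (hB : Algebra.adjoin A {s, t} = ⊤)
    (hd : IsCompanionParam i j s t d) (φ : R →ₐ[A] Matrix (Fin 2) (Fin 2) B)
    (hφx : φ x = !![0, s; 1, t]) (hφy : φ y = !![0, d; 0, 0]) (β : B →ₐ[A] C)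
    (hpair : IsCompanionPair (β s) (β t) c x y) (hc : lucasU (β s) (β t) (i + 1) * c = 1) :
    Nonempty (R ≃ₐ[A] Matrix (Fin 2) (Fin 2) B) := by
  have hβd : β d = c := by
    refine left_inv_eq_right_inv (a := lucasU (β s) (β t) (i + 1)) ?_ hc
    rw [← lucasU.map, ← map_mul, mul_comm, hd.left, map_one]
  obtain ⟨f, hfx, hfy⟩ := hpair.exists_algHom hc
  let ψ : Matrix (Fin 2) (Fin 2) B →ₐ[A] R := (f.restrictScalars A).comp β.mapMatrix
  have hmap (a b e : B) : β.mapMatrix !![0, a; b, e] = !![0, β a; β b, β e] := by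
    ext k l
    fin_cases k <;> fin_cases l <;> simp
  have hψx : ψ !![0, s; 1, t] = x := by
    rw [← hfx, AlgHom.comp_apply, hmap, map_one, AlgHom.restrictScalars_apply]
  have hψy : ψ !![0, d; 0, 0] = y := by
    rw [← hfy, AlgHom.comp_apply, hmap, hβd, map_zero, AlgHom.restrictScalars_apply]
  refine ⟨AlgEquiv.ofAlgHom φ ψ ?_ ?_⟩
  · refine algHom_eq_id_of_companion hd.left hB _ ?_ ?_
    · rw [AlgHom.comp_apply, hψx, hφx]
    · rw [AlgHom.comp_apply, hψy, hφy]
  · refine AlgHom.ext_of_adjoin_eq_top hR ?_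
    rintro _ (rfl | rfl)
    · rw [AlgHom.comp_apply, hφx, hψx, AlgHom.id_apply]
    · rw [AlgHom.comp_apply, hφy, hψy, AlgHom.id_apply]

section Center

variable {A R : Type*} [CommRing A] [Ring R] [Algebra A R]

/-- A ring as an algebra over its center, the center being taken as an `A`-subalgebra. -/
instance centerAlgebra : Algebra (Subalgebra.center A R) R where
  algebraMap := (Subalgebra.center A R).val.toRingHom
  commutes' z r := (Subalgebra.mem_center_iff.mp z.2 r).symm
  smul_def' _ _ := rfl

instance : IsScalarTower A (Subalgebra.center A R) R :=
  ⟨fun a z r => smul_mul_assoc a (z : R) r⟩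

lemma algebraMap_center_injective :
    Function.Injective (algebraMap (Subalgebra.center A R) R) :=
  Subtype.val_injective

theorem exists_center_isCompanionPair {x y : R} {i j : ℕ} (hR : Algebra.adjoin A {x, y} = ⊤)
    (hij : j ≤ i) (hg : (i + 1).Coprime (j + 1))
    (h : x ^ (i + 1) * y + y * x ^ (j + 1) = 1) (hy : y * y = 0) :
    ∃ s t c : Subalgebra.center A R, IsCompanionPair s t c x y ∧ IsCompanionParam i j s t c := by
  refine exists_isCompanionPair algebraMap_center_injective (fun z hzx hzy => ?_) hij hg h hy
  have hz : z ∈ Subalgebra.center A R :=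
    Subalgebra.mem_center_iff.mpr fun r =>
      (Algebra.commute_of_mem_adjoin_of_forall_mem_commute (hR ▸ Algebra.mem_top)
        (by rintro _ (rfl | rfl) <;> assumption)).symm
  exact ⟨⟨z, hz⟩, (mul_one z).symm⟩

end Center

section MatRing

variable (A : Type*) [CommRing A] (i j : ℕ)

lemma Xgen_Ygen_relation : Xgen A i j ^ i * Ygen A i j + Ygen A i j * Xgen A i j ^ j = 1 := by
  simpa [Xgen, Ygen] using RingQuot.mkAlgHom_rel A (MatRel.rel1 (A := A) (i := i) (j := j))

lemma Ygen_mul_self : Ygen A i j * Ygen A i j = 0 := by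
  simpa [Ygen, pow_two] using RingQuot.mkAlgHom_rel A (MatRel.rel2 (A := A) (i := i) (j := j))

lemma adjoin_Xgen_Ygen : Algebra.adjoin A {Xgen A i j, Ygen A i j} = ⊤ := by
  have h : Set.range (FreeAlgebra.ι A : Fin 2 → _) =
      {FreeAlgebra.ι A (0 : Fin 2), FreeAlgebra.ι A (1 : Fin 2)} := by
    ext z; simp [Fin.exists_fin_two, eq_comm]
  rw [Xgen, Ygen, ← Set.image_pair, ← h, ← AlgHom.map_adjoin, FreeAlgebra.adjoin_range_ι,
    Algebra.map_top, AlgHom.range_eq_top]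
  exact RingQuot.mkAlgHom_surjective A _

variable {A i j}

lemma exists_algHom_of_relation {S : Type*} [Ring S] [Algebra A S] {v w : S}
    (h : v ^ i * w + w * v ^ j = 1) (hw : w * w = 0) :
    ∃ φ : MatRing A i j →ₐ[A] S, φ (Xgen A i j) = v ∧ φ (Ygen A i j) = w := by
  refine ⟨RingQuot.liftAlgHom A ⟨FreeAlgebra.lift A ![v, w], ?_⟩, ?_, ?_⟩
  · rintro _ _ (_ | _)
    · simpa using h
    · simpa [pow_two] using hw
  · simp [Xgen]
  · simp [Ygen]

end MatRing

section CoefficientRing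

variable {A : Type*} [CommRing A]

lemma fpoly_eq_lucasU (n : ℕ) :
    fpoly A n = lucasU (MvPolynomial.X 0) (MvPolynomial.X 1) n := by
  induction n using Nat.twoStepInduction with
  | zero => rfl
  | one => rfl
  | more n h₁ h₂ => rw [fpoly, lucasU.add_two, h₁, h₂]

/-- The ideal of `A[s,t]` whose quotient is the coefficient ring of the matrices, written with the
truncated subtractions of the main theorem. -/
noncomputable def periodicIdeal (A : Type*) [CommRing A] (i j : ℕ) :
    Ideal (MvPolynomial (Fin 2) A) :=
  Ideal.span {fpoly A (i + j), fpoly A (i + j - 1) - (MvPolynomial.X 0) ^ (j - 1),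
    (MvPolynomial.X 0) ^ (i - j) - (-1) ^ (i - j)}

lemma periodicIdeal_le_ker_iff {C : Type*} [CommRing C] [Algebra A C]
    (g : MvPolynomial (Fin 2) A →ₐ[A] C) (i j : ℕ) :
    periodicIdeal A i j ≤ RingHom.ker g ↔
      IsPeriodicParam i j (g (MvPolynomial.X 0)) (g (MvPolynomial.X 1)) := by
  have hf (n : ℕ) : g (fpoly A n) = lucasU (g (MvPolynomial.X 0)) (g (MvPolynomial.X 1)) n := by
    rw [fpoly_eq_lucasU, lucasU.map]
  simp only [periodicIdeal, Ideal.span_le, Set.insert_subset_iff, Set.singleton_subset_iff,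
    SetLike.mem_coe, RingHom.mem_ker, map_sub, map_pow, map_neg, map_one, hf, sub_eq_zero]
  exact ⟨fun h => ⟨h.1, h.2.1, h.2.2⟩, fun h => ⟨h.1, h.2, h.3⟩⟩

lemma exists_algHom_quotient {C : Type*} [CommRing C] [Algebra A C]
    {I : Ideal (MvPolynomial (Fin 2) A)} {s t : C}
    (hI : I ≤ RingHom.ker (MvPolynomial.aeval (R := A) ![s, t])) :
    ∃ β : (MvPolynomial (Fin 2) A ⧸ I) →ₐ[A] C,
      β (Ideal.Quotient.mk I (MvPolynomial.X 0)) = s ∧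
      β (Ideal.Quotient.mk I (MvPolynomial.X 1)) = t :=
  ⟨Ideal.Quotient.liftₐ I _ fun _ ha => hI ha,
    MvPolynomial.aeval_X ![s, t] 0, MvPolynomial.aeval_X ![s, t] 1⟩

lemma adjoin_mk_X (I : Ideal (MvPolynomial (Fin 2) A)) :
    Algebra.adjoin A {Ideal.Quotient.mk I (MvPolynomial.X 0),
      Ideal.Quotient.mk I (MvPolynomial.X 1)} = ⊤ := by
  have hr : Set.range (MvPolynomial.X : Fin 2 → MvPolynomial (Fin 2) A) =
      {MvPolynomial.X 0, MvPolynomial.X 1} := by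
    ext z; simp [Fin.exists_fin_two, eq_comm]
  rw [← Set.image_pair, ← Ideal.Quotient.mkₐ_eq_mk A, ← AlgHom.map_adjoin, ← hr,
    MvPolynomial.adjoin_range_X, Algebra.map_top, AlgHom.range_eq_top]
  exact Ideal.Quotient.mkₐ_surjective A I

lemma neg_one_pow_mul_neg_one_pow_mul {C : Type*} [Ring C] (n : ℕ) (a : C) :
    (-1) ^ n * ((-1) ^ n * a) = a := by
  rw [← mul_assoc, ← pow_add, Even.neg_one_pow ⟨n, rfl⟩, one_mul]

lemma adjoin_pair_neg_one_pow_mul {B : Type*} [CommRing B] [Algebra A B] {s t : B}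
    (h : Algebra.adjoin A {s, t} = ⊤) (n : ℕ) : Algebra.adjoin A {s, (-1) ^ n * t} = ⊤ := by
  rw [eq_top_iff, ← h, Algebra.adjoin_le_iff]
  rintro z (rfl | rfl)
  · exact Algebra.subset_adjoin (by simp)
  · have hz : (-1) ^ n * z ∈ Algebra.adjoin A {s, (-1) ^ n * z} := Algebra.subset_adjoin (by simp)
    have := mul_mem (pow_mem (neg_mem (one_mem _)) n) hz
    rwa [neg_one_pow_mul_neg_one_pow_mul] at this

theorem exists_isCompanionParam_quotient {i j : ℕ} (hij : j ≤ i) (hg : (i + 1).Coprime (j + 1))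
    {I : Ideal (MvPolynomial (Fin 2) A)} (hI : periodicIdeal A (i + 1) (j + 1) ≤ I) :
    ∃ d, IsCompanionParam i j (Ideal.Quotient.mk I (MvPolynomial.X 0))
      ((-1) ^ j * Ideal.Quotient.mk I (MvPolynomial.X 1)) d :=
  (isPeriodicParam_iff_exists_isCompanionParam hij hg).mp <|
    (periodicIdeal_le_ker_iff (Ideal.Quotient.mkₐ A I) _ _).mp <|
      hI.trans (Ideal.Quotient.mkₐ_ker A I).ge

theorem exists_algHom_quotient_of_isCompanionParam {C : Type*} [CommRing C] [Algebra A C]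
    {s t c : C} {i j : ℕ} (hij : j ≤ i) (hg : (i + 1).Coprime (j + 1))
    {I : Ideal (MvPolynomial (Fin 2) A)} (hI : I ≤ periodicIdeal A (i + 1) (j + 1))
    (hc : IsCompanionParam i j s t c) :
    ∃ β : (MvPolynomial (Fin 2) A ⧸ I) →ₐ[A] C,
      β (Ideal.Quotient.mk I (MvPolynomial.X 0)) = s ∧
      β ((-1) ^ j * Ideal.Quotient.mk I (MvPolynomial.X 1)) = t := by
  rw [← neg_one_pow_mul_neg_one_pow_mul j t] at hc
  have hker := (periodicIdeal_le_ker_iff (MvPolynomial.aeval (R := A) ![s, (-1) ^ j * t])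
    (i + 1) (j + 1)).mpr <|
      (isPeriodicParam_iff_exists_isCompanionParam hij hg).mpr ⟨c, by simpa using hc⟩
  obtain ⟨β, hβs, hβt⟩ := exists_algHom_quotient (hI.trans hker)
  refine ⟨β, hβs, ?_⟩
  rw [map_mul, map_pow, map_neg, map_one, hβt, neg_one_pow_mul_neg_one_pow_mul]

theorem nonempty_algEquiv_matrix_quotient {R : Type*} [Ring R] [Algebra A R] {x y : R} {i j : ℕ}
    (hij : j ≤ i) (hg : (i + 1).Coprime (j + 1)) {I : Ideal (MvPolynomial (Fin 2) A)}
    (hI : I ≤ periodicIdeal A (i + 1) (j + 1))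
    (hR : Algebra.adjoin A {x, y} = ⊤) (h : x ^ (i + 1) * y + y * x ^ (j + 1) = 1)
    (hy : y * y = 0) {d : MvPolynomial (Fin 2) A ⧸ I}
    (hd : IsCompanionParam i j (Ideal.Quotient.mk I (MvPolynomial.X 0))
      ((-1) ^ j * Ideal.Quotient.mk I (MvPolynomial.X 1)) d)
    (φ : R →ₐ[A] Matrix (Fin 2) (Fin 2) (MvPolynomial (Fin 2) A ⧸ I))
    (hφx : φ x = !![0, Ideal.Quotient.mk I (MvPolynomial.X 0);
      1, (-1) ^ j * Ideal.Quotient.mk I (MvPolynomial.X 1)])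
    (hφy : φ y = !![0, d; 0, 0]) :
    Nonempty (R ≃ₐ[A] Matrix (Fin 2) (Fin 2) (MvPolynomial (Fin 2) A ⧸ I)) := by
  obtain ⟨s, t, c, hpair, hc⟩ := exists_center_isCompanionPair hR hij hg h hy
  obtain ⟨β, rfl, rfl⟩ := exists_algHom_quotient_of_isCompanionParam hij hg hI hc
  exact nonempty_algEquiv_of_isCompanionPair hR
    (adjoin_pair_neg_one_pow_mul (adjoin_mk_X I) j) hd φ hφx hφy β hpair hc.left

end CoefficientRing

theorem stmt11 (A : Type*) [CommRing A] (i j : ℕ) (hi : 1 ≤ i) (hj : 1 ≤ j)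
    (hij : i ≥ j) (hgcd : Nat.gcd i j = 1)
    (I : Ideal (MvPolynomial (Fin 2) A))
    (hI : I = Ideal.span
      {fpoly A (i + j),
       fpoly A (i + j - 1) - (MvPolynomial.X 0) ^ (j - 1),
       (MvPolynomial.X 0) ^ (i - j) - (-1) ^ (i - j)}) :
    Nonempty (MatRing A i j ≃ₐ[A]
      Matrix (Fin 2) (Fin 2) (MvPolynomial (Fin 2) A ⧸ I)) := by
  obtain ⟨i, rfl⟩ := Nat.exists_eq_add_of_le' hi
  obtain ⟨j, rfl⟩ := Nat.exists_eq_add_of_le' hj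
  have hij : j ≤ i := Nat.le_of_succ_le_succ hij
  obtain ⟨d, hd⟩ := exists_isCompanionParam_quotient hij hgcd hI.ge
  have hmat := isCompanionPair_matrix (Ideal.Quotient.mk I (MvPolynomial.X 0))
    ((-1) ^ j * Ideal.Quotient.mk I (MvPolynomial.X 1)) d
  obtain ⟨φ, hφx, hφy⟩ :=
    exists_algHom_of_relation (A := A) (hmat.pow_mul_add_mul_pow_eq_one hd) hmat.mul_self
  exact nonempty_algEquiv_matrix_quotient hij hgcd hI.le (adjoin_Xgen_Ygen A _ _)
    (Xgen_Ygen_relation A _ _) (Ygen_mul_self A _ _) hd φ hφx hφy
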